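/- Let λ ∈ ℝ and let Λ : ℝ → ℝ be twice continuously differentiable. Define v(x,y) := (y² + x^{2/3})^{λ/2} · Λ(y·x^{−1/3}) for (x,y) ∈ (0,∞) × ℝ. Then v satisfies y·∂ₓv(x,y) − ∂²_{yy}v(x,y) = 0 at every point of (0,∞) × ℝ if and only if Λ satisfies, for every t ∈ ℝ, the ordinary differential equation Λ''(t) + (t²/3 + 2λt/(1+t²))·Λ'(t) + λ·( −(1/3)·t/(1+t²) + (1 + (λ−1)t²)/(1+t²)² )·Λ(t) = 0. -/

import Mathlib

/-!
Both factors of `r ^ l = x ^ (l / 3) (1 + t²) ^ (l / 2)` interact with the operator in a simple way.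
On `x ^ a f(t)` the scaling invariance turns `y ∂ₓ - ∂_yy` into the ordinary differential operator
`f ↦ f'' + (t² / 3) f' - a t f`, up to the factor `-x ^ (a - 2 / 3)`. Conjugating `d/dt` by the
weight `(1 + t²) ^ m` replaces it by `d/dt + 2 m t / (1 + t²)`. With `a = l / 3` and `m = l / 2` the
result is the stated equation times a factor that never vanishes, and every `t` is attained
on the line `x = 1`.
-/

open Filter Set

/-- The self-similar ansatz `v(x,y) = (y² + x^(2/3))^(l/2) · Λ(y · x^(-1/3))`,
i.e. `v = r^l Λ(t)` in the polar-like variables `r, t`. -/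
noncomputable def selfSimilar (l : ℝ) (Λ : ℝ → ℝ) (x y : ℝ) : ℝ :=
  (y ^ 2 + x ^ ((2 : ℝ) / 3)) ^ (l / 2) * Λ (y * x ^ (-(1 : ℝ) / 3))

open Topology

/-- The degenerate operator `y ∂ₓ - ∂_yy` of stationary kinetic Fokker–Planck type, applied to `v`
and evaluated at `(x, y)`. -/
noncomputable def kolmogorovOp (v : ℝ → ℝ → ℝ) (x y : ℝ) : ℝ :=
  y * deriv (fun s => v s y) x - deriv (deriv (v x)) y

/-- The ordinary differential operator which `y ∂ₓ - ∂_yy` induces on the profile `Λ` of the ansatz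
`r ^ l Λ(t)`. It is normalized to have leading coefficient `1`. -/
noncomputable def profileOp (l : ℝ) (Λ : ℝ → ℝ) (t : ℝ) : ℝ :=
  deriv (deriv Λ) t
    + (t ^ 2 / 3 + 2 * l * t / (1 + t ^ 2)) * deriv Λ t
    + l * (-(1 / 3) * t / (1 + t ^ 2) + (1 + (l - 1) * t ^ 2) / (1 + t ^ 2) ^ 2) * Λ t

lemma kolmogorovOp_congr {u v : ℝ → ℝ → ℝ} {x : ℝ} (h : u =ᶠ[𝓝 x] v) (y : ℝ) :
    kolmogorovOp u x y = kolmogorovOp v x y := by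
  have h_slice : (fun s => u s y) =ᶠ[𝓝 x] fun s => v s y := h.mono fun s hs => congrFun hs y
  rw [kolmogorovOp, kolmogorovOp, h_slice.deriv_eq, h.eq_of_nhds]

lemma hasDerivAt_rpow_mul_comp_mul_rpow {f : ℝ → ℝ} {f' x y : ℝ} (a b : ℝ) (hx : x ≠ 0)
    (hf : HasDerivAt f f' (y * x ^ b)) :
    HasDerivAt (fun s => s ^ a * f (y * s ^ b))
      (x ^ a / x * (a * f (y * x ^ b) + b * (y * x ^ b) * f')) x := by
  have h_pow (p : ℝ) : HasDerivAt (fun s : ℝ => s ^ p) (p * (x ^ p / x)) x := by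
    simpa only [Real.rpow_sub_one hx] using Real.hasDerivAt_rpow_const (p := p) (Or.inl hx)
  have h_comp : HasDerivAt (fun s => f (y * s ^ b)) (f' * (y * (b * (x ^ b / x)))) x :=
    hf.comp x ((h_pow b).const_mul y)
  exact ((h_pow a).mul h_comp).congr_deriv (by ring)

lemma deriv_deriv_const_mul_comp_mul_right {𝕜 : Type*} [NontriviallyNormedField 𝕜]
    (c b : 𝕜) (f : 𝕜 → 𝕜) (y : 𝕜) :
    deriv (deriv fun u => c * f (u * b)) y = c * b ^ 2 * deriv (deriv f) (y * b) := by
  have h_deriv (c : 𝕜) (g : 𝕜 → 𝕜) :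
      deriv (fun u => c * g (u * b)) = fun u => c * b * deriv g (u * b) := by
    ext u
    simp only [mul_comm _ b, deriv_const_mul_field, deriv_comp_mul_left, smul_eq_mul]
    ring
  rw [h_deriv, h_deriv, mul_assoc c, ← sq]

lemma kolmogorovOp_rpow_mul_comp (a : ℝ) {f : ℝ → ℝ} {x y t : ℝ} (hx : 0 < x)
    (ht : t = y * x ^ (-(1 : ℝ) / 3)) (hf : DifferentiableAt ℝ f t) :
    kolmogorovOp (fun x y => x ^ a * f (y * x ^ (-(1 : ℝ) / 3))) x y
      = -x ^ (a - 2 / 3) * (deriv (deriv f) t + t ^ 2 / 3 * deriv f t - a * t * f t) := by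
  have h_inv : x⁻¹ = (x ^ (-(1 : ℝ) / 3)) ^ 3 := by
    rw [← Real.rpow_mul_natCast hx.le, ← Real.rpow_neg_one]
    norm_num
  have h_sq : x ^ (a - 2 / 3) = x ^ a * (x ^ (-(1 : ℝ) / 3)) ^ 2 := by
    rw [← Real.rpow_mul_natCast hx.le, ← Real.rpow_add hx]
    ring_nf
  subst ht
  rw [kolmogorovOp, (hasDerivAt_rpow_mul_comp_mul_rpow a _ hx.ne' hf.hasDerivAt).deriv,
    deriv_deriv_const_mul_comp_mul_right, div_eq_mul_inv _ x, h_inv, h_sq]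
  ring

lemma selfSimilar_eq_rpow_mul (l : ℝ) (Λ : ℝ → ℝ) {x : ℝ} (hx : 0 < x) (y : ℝ) :
    selfSimilar l Λ x y = x ^ (l / 3)
      * ((1 + (y * x ^ (-(1 : ℝ) / 3)) ^ 2) ^ (l / 2) * Λ (y * x ^ (-(1 : ℝ) / 3))) := by
  have h_cancel : x ^ ((2 : ℝ) / 3) * (x ^ (-(1 : ℝ) / 3)) ^ 2 = 1 := by
    rw [← Real.rpow_mul_natCast hx.le, ← Real.rpow_add hx]
    norm_num
  have h_radius : y ^ 2 + x ^ ((2 : ℝ) / 3)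
      = x ^ ((2 : ℝ) / 3) * (1 + (y * x ^ (-(1 : ℝ) / 3)) ^ 2) := by
    linear_combination (-y ^ 2) * h_cancel
  have h_exponent : (2 : ℝ) / 3 * (l / 2) = l / 3 := by ring
  rw [selfSimilar, h_radius, Real.mul_rpow (by positivity) (by positivity),
    ← Real.rpow_mul hx.le, h_exponent, mul_assoc]

lemma hasDerivAt_one_add_sq (t : ℝ) : HasDerivAt (fun s : ℝ => 1 + s ^ 2) (2 * t) t := by
  simpa using (hasDerivAt_pow 2 t).const_add 1

lemma hasDerivAt_one_add_sq_rpow_mul (m : ℝ) {g : ℝ → ℝ} {g' t : ℝ} (hg : HasDerivAt g g' t) :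
    HasDerivAt (fun s => (1 + s ^ 2) ^ m * g s)
      ((1 + t ^ 2) ^ m * (g' + 2 * m * t / (1 + t ^ 2) * g t)) t := by
  have h_ne : 1 + t ^ 2 ≠ 0 := by positivity
  refine (((hasDerivAt_one_add_sq t).rpow_const (p := m) (Or.inl h_ne)).mul hg).congr_deriv ?_
  rw [Real.rpow_sub_one h_ne]
  ring

lemma hasDerivAt_mul_div_one_add_sq (c t : ℝ) :
    HasDerivAt (fun s => c * s / (1 + s ^ 2)) (c * (1 - t ^ 2) / (1 + t ^ 2) ^ 2) t := by
  have h_num : HasDerivAt (fun s => c * s) c t := by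
    simpa using (hasDerivAt_id t).const_mul c
  exact (h_num.div (hasDerivAt_one_add_sq t) (by positivity)).congr_deriv (by ring)

lemma deriv_one_add_sq_rpow_mul {Λ : ℝ → ℝ} (hΛ : Differentiable ℝ Λ) (m : ℝ) :
    deriv (fun s => (1 + s ^ 2) ^ m * Λ s)
      = fun t => (1 + t ^ 2) ^ m * (deriv Λ t + 2 * m * t / (1 + t ^ 2) * Λ t) :=
  funext fun t => (hasDerivAt_one_add_sq_rpow_mul m (hΛ t).hasDerivAt).deriv

lemma deriv_deriv_one_add_sq_rpow_mul {Λ : ℝ → ℝ} {t : ℝ} (hΛ : Differentiable ℝ Λ)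
    (hΛ' : DifferentiableAt ℝ (deriv Λ) t) (m : ℝ) :
    deriv (deriv fun s => (1 + s ^ 2) ^ m * Λ s) t
      = (1 + t ^ 2) ^ m * (deriv (deriv Λ) t + 4 * m * t / (1 + t ^ 2) * deriv Λ t
        + 2 * m * (1 + (2 * m - 1) * t ^ 2) / (1 + t ^ 2) ^ 2 * Λ t) := by
  have h_inner : HasDerivAt (fun s => deriv Λ s + 2 * m * s / (1 + s ^ 2) * Λ s)
      (deriv (deriv Λ) t + (2 * m * (1 - t ^ 2) / (1 + t ^ 2) ^ 2 * Λ t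
        + 2 * m * t / (1 + t ^ 2) * deriv Λ t)) t :=
    hΛ'.hasDerivAt.add ((hasDerivAt_mul_div_one_add_sq _ t).mul (hΛ t).hasDerivAt)
  rw [deriv_one_add_sq_rpow_mul hΛ, (hasDerivAt_one_add_sq_rpow_mul m h_inner).deriv]
  field_simp
  ring

lemma kolmogorovOp_selfSimilar (l : ℝ) {Λ : ℝ → ℝ} {x y t : ℝ} (hx : 0 < x)
    (ht : t = y * x ^ (-(1 : ℝ) / 3)) (hΛ : Differentiable ℝ Λ)
    (hΛ' : DifferentiableAt ℝ (deriv Λ) t) :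
    kolmogorovOp (selfSimilar l Λ) x y
      = -(x ^ (l / 3 - 2 / 3) * (1 + t ^ 2) ^ (l / 2)) * profileOp l Λ t := by
  have h_eq : selfSimilar l Λ =ᶠ[𝓝 x] fun x y => x ^ (l / 3)
      * (fun s => (1 + s ^ 2) ^ (l / 2) * Λ s) (y * x ^ (-(1 : ℝ) / 3)) := by
    filter_upwards [lt_mem_nhds hx] with s hs
    exact funext (selfSimilar_eq_rpow_mul l Λ hs)
  have h_diff : DifferentiableAt ℝ (fun s => (1 + s ^ 2) ^ (l / 2) * Λ s) t :=
    (hasDerivAt_one_add_sq_rpow_mul _ (hΛ t).hasDerivAt).differentiableAt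
  rw [kolmogorovOp_congr h_eq, kolmogorovOp_rpow_mul_comp _ hx ht h_diff,
    deriv_deriv_one_add_sq_rpow_mul hΛ hΛ', deriv_one_add_sq_rpow_mul hΛ, profileOp]
  field_simp
  ring

theorem stmt1_general (l : ℝ) {Λ : ℝ → ℝ} (hΛ : Differentiable ℝ Λ)
    (hΛ' : Differentiable ℝ (deriv Λ)) :
    (∀ x y : ℝ, 0 < x → kolmogorovOp (selfSimilar l Λ) x y = 0) ↔ ∀ t, profileOp l Λ t = 0 := by
  constructor
  · intro h_pde t
    have h_factor := kolmogorovOp_selfSimilar l one_pos (y := t) (by simp) hΛ (hΛ' t)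
    rw [h_pde 1 t one_pos] at h_factor
    exact (mul_eq_zero.1 h_factor.symm).resolve_left (neg_ne_zero.2 (by positivity))
  · intro h_ode x y hx
    rw [kolmogorovOp_selfSimilar l hx rfl hΛ (hΛ' _), h_ode, mul_zero]

/-- `v = r^λ Λ(t)` solves `y ∂ₓ v - ∂_yy v = 0` on `(0,∞) × ℝ` if and only if the
profile `Λ` solves the second-order ODE
`Λ'' + (t²/3 + 2λt/(1+t²)) Λ' + λ(-(1/3) t/(1+t²) + (1+(λ-1)t²)/(1+t²)²) Λ = 0`. -/
theorem stmt1 (l : ℝ) (Λ : ℝ → ℝ) (hΛ : ContDiff ℝ 2 Λ) :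
    (∀ x y : ℝ, 0 < x →
        y * deriv (fun s : ℝ => selfSimilar l Λ s y) x
          - deriv (deriv (fun t : ℝ => selfSimilar l Λ x t)) y = 0)
    ↔ (∀ t : ℝ,
        deriv (deriv Λ) t
          + (t ^ 2 / 3 + 2 * l * t / (1 + t ^ 2)) * deriv Λ t
          + l * (-(1 / 3) * t / (1 + t ^ 2) + (1 + (l - 1) * t ^ 2) / (1 + t ^ 2) ^ 2) * Λ t
          = 0) := by
  exact stmt1_general l (hΛ.differentiable two_ne_zero) hΛ.differentiable_deriv_two
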